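/- With U, V_1, …, V_L as in the context, for all natural numbers β, β_1, …, β_L one has E[U^β · ∏_{ℓ=1}^L V_ℓ^{β_ℓ}] ≥ 1_{β+β_1+⋯+β_L is even} · ρ^{2·N_odd}, where N_odd = #{1 ≤ ℓ ≤ L : β_ℓ is odd}. -/

import Mathlib

/-!
Write `a = ρ²`, `s = √(1 - ρ⁴)`, so that `a² + s² = 1`, and let `m n` be the `n`-th standard Gaussian
moment. Expanding every `V_ℓ ^ β_ℓ` binomially and using independence,
`E[U^β ∏ V_ℓ^{β_ℓ}] = ∑_f m (β + ∑ f_ℓ) ∏_ℓ c (β_ℓ) (f_ℓ)` with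
`c b j = C(b, j) a^j s^(b-j) m (b-j) ≥ 0` (`moment_expansion`).

Odd moments vanish and even ones are at least `1` (`gaussMoment_even_ge_one`). So only the `f` with
`f_ℓ ≡ β_ℓ` modulo 2 contribute, and when `β + ∑ β_ℓ` is even each of these has
`m (β + ∑ f_ℓ) ≥ 1`. The expectation is then at least `∏_ℓ ∑_j c (β_ℓ) j`. For `b = 2k + r` with
`r ∈ {0, 1}`, keeping the terms `j = 2i + r` and using `C(2k+r, 2i+r) ≥ C(k, i)` gives
`∑_j c b j ≥ a^r (a² + s²)^k = a^r` (`sum_binomCoeff_ge`), which is the claimed bound.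
-/

open MeasureTheory ProbabilityTheory

/-- The `(L+1)`-fold product of standard Gaussian measures; coordinate `0` is `U`
and coordinate `ℓ.succ` is `W_ℓ`. -/
noncomputable def gaussSpace (L : ℕ) : Measure (Fin (L + 1) → ℝ) :=
  Measure.pi fun _ => gaussianReal 0 1

/-- The `n`-th moment of the standard Gaussian. -/
noncomputable def gaussMoment (n : ℕ) : ℝ := ∫ x, x ^ n ∂(gaussianReal 0 1)

theorem integrable_pow_gaussian (n : ℕ) :
    Integrable (fun x : ℝ => x ^ n) (gaussianReal 0 1) := by
  have h := (memLp_id_gaussianReal (μ := 0) (v := 1) (n : NNReal)).integrable_norm_pow'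
  refine h.mono' (by fun_prop) (Filter.Eventually.of_forall fun x => ?_)
  simp

theorem gaussMoment_odd {n : ℕ} (hn : Odd n) : gaussMoment n = 0 := by
  have h : gaussMoment n = ∫ x, (-x) ^ n ∂(gaussianReal 0 1) := by
    have hmap := gaussianReal_map_neg (μ := 0) (v := 1)
    rw [neg_zero] at hmap
    unfold gaussMoment
    conv_lhs => rw [← hmap]
    rw [integral_map (by fun_prop) (by fun_prop)]
  simp only [hn.neg_pow, integral_neg] at h
  change gaussMoment n = -gaussMoment n at h
  linarith

theorem gaussMoment_two : gaussMoment 2 = 1 := by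
  have h := variance_eq_sub (memLp_id_gaussianReal (μ := 0) (v := 1) 2)
  rw [variance_id_gaussianReal] at h
  simpa [gaussMoment, integral_id_gaussianReal] using h.symm

/-- Integrate Bernoulli's inequality `(x²)^k ≥ 1 + k (x² - 1)`, whose right side has mean `1`. -/
theorem gaussMoment_even_ge_one (k : ℕ) : 1 ≤ gaussMoment (2 * k) := by
  have hint : Integrable (fun x : ℝ => x ^ 2 - 1) (gaussianReal 0 1) :=
    (integrable_pow_gaussian 2).sub (integrable_const _)
  have h : ∫ x, (1 + (k : ℝ) * (x ^ 2 - 1)) ∂(gaussianReal 0 1) ≤ gaussMoment (2 * k) := by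
    refine integral_mono ((integrable_const _).add (hint.const_mul _))
      (integrable_pow_gaussian _) fun x => ?_
    have := one_add_mul_le_pow (a := x ^ 2 - 1) (by nlinarith [sq_nonneg x]) k
    simpa [pow_mul] using this
  have e : ∫ x, (1 + (k : ℝ) * (x ^ 2 - 1)) ∂(gaussianReal 0 1) = 1 := by
    rw [integral_add (integrable_const _) (hint.const_mul _), integral_const_mul,
      integral_sub (integrable_pow_gaussian 2) (integrable_const _)]
    change _ + (k : ℝ) * (gaussMoment 2 - _) = 1
    simp [gaussMoment_two]
  linarith

theorem gaussMoment_nonneg (n : ℕ) : 0 ≤ gaussMoment n := by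
  rcases Nat.even_or_odd' n with ⟨k, rfl | rfl⟩
  · linarith [gaussMoment_even_ge_one k]
  · exact (gaussMoment_odd ⟨k, rfl⟩).ge

/-- The coefficient of `u ^ j` in `E[(a u + s W) ^ b]`, for `W` standard Gaussian and `j ≤ b`. -/
noncomputable def binomCoeff (a s : ℝ) (b j : ℕ) : ℝ :=
  a ^ j * s ^ (b - j) * (b.choose j) * gaussMoment (b - j)

theorem binomCoeff_nonneg {a s : ℝ} (ha : 0 ≤ a) (hs : 0 ≤ s) (b j : ℕ) :
    0 ≤ binomCoeff a s b j := by
  have := gaussMoment_nonneg (b - j)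
  unfold binomCoeff
  positivity

theorem choose_le_choose_double (k i r : ℕ) :
    k.choose i ≤ (2 * k + r).choose (2 * i + r) := by
  induction r with
  | zero =>
    -- The `(i, i)` term of the Vandermonde sum for `C(k + k, i + i)` is `C(k, i)²`.
    have h1 : k.choose i * k.choose i ≤ (k + k).choose (i + i) := by
      rw [Nat.add_choose_eq]
      exact Finset.single_le_sum (f := fun p : ℕ × ℕ => k.choose p.1 * k.choose p.2)
        (fun _ _ => Nat.zero_le _) (a := (i, i)) (by simp)
    rw [add_zero, add_zero, two_mul, two_mul]
    exact (Nat.le_mul_self _).trans h1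
  | succ r ih =>
    rw [← add_assoc, ← add_assoc, Nat.choose_succ_succ]
    omega

theorem sum_binomCoeff_ge {a s : ℝ} (ha : 0 ≤ a) (hs : 0 ≤ s) (has : a ^ 2 + s ^ 2 = 1)
    (k r : ℕ) :
    a ^ r ≤ ∑ j ∈ Finset.range (2 * k + r + 1), binomCoeff a s (2 * k + r) j := by
  have hinj : Set.InjOn (fun i : ℕ => 2 * i + r) (Finset.range (k + 1)) := by
    intro x _ y _ h
    simp only at h
    omega
  calc a ^ r = a ^ r * (a ^ 2 + s ^ 2) ^ k := by rw [has]; simp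
    _ = ∑ i ∈ Finset.range (k + 1), a ^ r * ((a ^ 2) ^ i * (s ^ 2) ^ (k - i) * k.choose i) := by
      rw [add_pow, Finset.mul_sum]
    _ ≤ ∑ i ∈ Finset.range (k + 1), binomCoeff a s (2 * k + r) (2 * i + r) := by
      refine Finset.sum_le_sum fun i _ => ?_
      have e : 2 * k + r - (2 * i + r) = 2 * (k - i) := by omega
      have hm := gaussMoment_even_ge_one (k - i)
      have hc : (k.choose i : ℝ) ≤ ((2 * k + r).choose (2 * i + r) : ℝ) := by
        exact_mod_cast choose_le_choose_double k i r
      unfold binomCoeff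
      rw [e]
      calc a ^ r * ((a ^ 2) ^ i * (s ^ 2) ^ (k - i) * k.choose i)
          = a ^ (2 * i + r) * s ^ (2 * (k - i)) * k.choose i * 1 := by
            rw [pow_add, pow_mul, pow_mul]; ring
        _ ≤ _ := by gcongr
    _ = ∑ j ∈ (Finset.range (k + 1)).image (fun i => 2 * i + r),
          binomCoeff a s (2 * k + r) j := (Finset.sum_image hinj).symm
    _ ≤ _ := by
      refine Finset.sum_le_sum_of_subset_of_nonneg ?_ fun j _ _ => binomCoeff_nonneg ha hs _ j
      intro j hj
      simp only [Finset.mem_image, Finset.mem_range] at hj ⊢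
      omega

theorem moment_expansion (L : ℕ) (a s : ℝ) (β : ℕ) (βv : Fin L → ℕ) :
    ∫ g, (g 0) ^ β * ∏ ℓ : Fin L, (a * g 0 + s * g ℓ.succ) ^ βv ℓ ∂(gaussSpace L) =
      ∑ f ∈ Fintype.piFinset fun ℓ => Finset.range (βv ℓ + 1),
        gaussMoment (β + ∑ ℓ, f ℓ) * ∏ ℓ, binomCoeff a s (βv ℓ) (f ℓ) := by
  -- The factor of the `f`-term of the expansion that depends on the coordinate `i`.
  let h : (Fin L → ℕ) → Fin (L + 1) → ℝ → ℝ := fun f =>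
    Fin.cons (fun x => x ^ (β + ∑ ℓ, f ℓ))
      (fun ℓ x => (a ^ f ℓ * s ^ (βv ℓ - f ℓ) * (βv ℓ).choose (f ℓ)) * x ^ (βv ℓ - f ℓ))
  have hexp : ∀ g : Fin (L + 1) → ℝ,
      (g 0) ^ β * ∏ ℓ : Fin L, (a * g 0 + s * g ℓ.succ) ^ βv ℓ =
        ∑ f ∈ Fintype.piFinset fun ℓ => Finset.range (βv ℓ + 1), ∏ i, h f i (g i) := by
    intro g
    simp only [add_pow]
    rw [Finset.prod_univ_sum, Finset.mul_sum]
    refine Finset.sum_congr rfl fun f _ => ?_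
    simp only [h, Fin.prod_univ_succ, Fin.cons_zero, Fin.cons_succ]
    rw [pow_add, ← Finset.prod_pow_eq_pow_sum, mul_assoc, ← Finset.prod_mul_distrib]
    congr 1
    refine Finset.prod_congr rfl fun ℓ _ => ?_
    rw [mul_pow, mul_pow]
    ring
  have hint : ∀ f i, Integrable (h f i) (gaussianReal 0 1) := by
    intro f i
    refine Fin.cases ?_ (fun ℓ => ?_) i
    · exact integrable_pow_gaussian _
    · exact (integrable_pow_gaussian _).const_mul _
  simp only [hexp]
  unfold gaussSpace
  rw [integral_finsetSum _ fun f _ => Integrable.fintype_prod (hint f)]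
  refine Finset.sum_congr rfl fun f _ => ?_
  rw [integral_fintype_prod_eq_prod]
  simp only [h, Fin.prod_univ_succ, Fin.cons_zero, Fin.cons_succ, integral_const_mul]
  rfl

/-- with `V_ℓ = ρ²U + √(1-ρ⁴)W_ℓ`, the Gaussian joint moments satisfy
`E[U^β ∏_ℓ V_ℓ^{β_ℓ}] ≥ 1_{β+β_1+⋯+β_L even} · ρ^{2 N_odd}`, where `N_odd` is the
number of indices `ℓ` with `β_ℓ` odd. -/
theorem gaussian_moment_lower_bound
    (L : ℕ) (hL : 1 ≤ L) (ρ : ℝ) (hρ : ρ ∈ Set.Ioc (0 : ℝ) 1)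
    (β : ℕ) (βv : Fin L → ℕ) :
    (if Even (β + ∑ ℓ, βv ℓ) then 1 else 0) *
        ρ ^ (2 * (Finset.univ.filter fun ℓ : Fin L => Odd (βv ℓ)).card) ≤
      ∫ g, (g 0) ^ β *
        ∏ ℓ : Fin L, (ρ ^ 2 * g 0 + Real.sqrt (1 - ρ ^ 4) * g ℓ.succ) ^ βv ℓ
        ∂(gaussSpace L) := by
  rw [moment_expansion]
  have ha : 0 ≤ ρ ^ 2 := sq_nonneg ρ
  have hs : 0 ≤ Real.sqrt (1 - ρ ^ 4) := Real.sqrt_nonneg _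
  have has : (ρ ^ 2) ^ 2 + Real.sqrt (1 - ρ ^ 4) ^ 2 = 1 := by
    rw [Real.sq_sqrt (sub_nonneg.2 (pow_le_one₀ hρ.1.le hρ.2))]
    ring
  generalize Real.sqrt (1 - ρ ^ 4) = s at hs has ⊢
  rw [pow_mul]
  generalize ρ ^ 2 = a at ha has ⊢
  have hprod : ∀ f : Fin L → ℕ, 0 ≤ ∏ ℓ, binomCoeff a s (βv ℓ) (f ℓ) := fun f =>
    Finset.prod_nonneg fun ℓ _ => binomCoeff_nonneg ha hs _ _
  split_ifs with hev
  swap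
  · rw [zero_mul]
    exact Finset.sum_nonneg fun f _ => mul_nonneg (gaussMoment_nonneg _) (hprod f)
  rw [one_mul]
  calc a ^ (Finset.univ.filter fun ℓ : Fin L => Odd (βv ℓ)).card
      = ∏ ℓ, (if Odd (βv ℓ) then a else 1) := by
        rw [Finset.prod_ite]; simp
    _ ≤ ∏ ℓ, ∑ j ∈ Finset.range (βv ℓ + 1), binomCoeff a s (βv ℓ) j := by
        refine Finset.prod_le_prod (fun ℓ _ => by split_ifs <;> simp [ha]) fun ℓ _ => ?_
        rcases Nat.even_or_odd' (βv ℓ) with ⟨k, hk | hk⟩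
        · rw [hk, if_neg (Nat.not_odd_iff_even.2 (even_two_mul k))]
          simpa using sum_binomCoeff_ge ha hs has k 0
        · rw [hk]
          simpa using sum_binomCoeff_ge ha hs has k 1
    _ = ∑ f ∈ Fintype.piFinset fun ℓ => Finset.range (βv ℓ + 1),
          ∏ ℓ, binomCoeff a s (βv ℓ) (f ℓ) := Finset.prod_univ_sum _ _
    _ ≤ _ := by
        refine Finset.sum_le_sum fun f hf => ?_
        by_cases hpar : ∀ ℓ, Even (βv ℓ - f ℓ)
        · have hsum : ∑ ℓ, βv ℓ = ∑ ℓ, f ℓ + ∑ ℓ, (βv ℓ - f ℓ) := by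
            rw [← Finset.sum_add_distrib]
            refine Finset.sum_congr rfl fun ℓ _ => ?_
            have := Fintype.mem_piFinset.1 hf ℓ
            rw [Finset.mem_range] at this
            omega
          have hd : Even (∑ ℓ, (βv ℓ - f ℓ)) := Finset.even_sum _ fun ℓ _ => hpar ℓ
          rw [hsum, ← add_assoc, Nat.even_add] at hev
          obtain ⟨k, hk⟩ := even_iff_exists_two_mul.1 (hev.2 hd)
          rw [hk]
          exact le_mul_of_one_le_left (hprod f) (gaussMoment_even_ge_one k)
        · obtain ⟨ℓ, hℓ⟩ := not_forall.1 hpar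
          have h0 : ∏ ℓ, binomCoeff a s (βv ℓ) (f ℓ) = 0 := by
            refine Finset.prod_eq_zero (Finset.mem_univ ℓ) ?_
            rw [binomCoeff, gaussMoment_odd (Nat.not_even_iff_odd.1 hℓ), mul_zero]
          rw [h0, mul_zero]
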